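/- arXiv:2111.00371 — 2 statements merged into one kernel-verified Lean document; each statement's English description precedes it below -/
import Mathlib

section
/- Let (A, μ, α, β) be a unitary BiHom-associative algebra, and let ψ, ω : A → A be linear maps with ψ(ab) = ψ(a)ψ(b), ω(ab) = ω(a)ω(b), ψ(1_A) = ω(1_A) = 1_A, such that α, β, ψ, ω are bijective and pairwise commuting. Suppose r ∈ A⊗A is a solution to the associative BiHom-Yang-Baxter equation of weight λ in (A, μ, α, β) such that r is α-, β-, ψ-, and ω-invariant. Define R : A → A by R(a) = β²ψ(r¹)·(α⁻¹β⁻¹(a)·αω(r²)). Then (A, μ, R, α, β) is a Rota-Baxter BiHom-associative algebra of weight λ. -/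
/-!
A BiHom-associative product with bijective structure maps is a twist `ab = α(a) ∘ β(b)` of a unital
associative product `∘` having the same unit. The invariance of `r` absorbs all structure maps, so
with respect to `∘` the element `q = ψ(r¹) ⊗ ω(r²)` solves the ordinary associative Yang-Baxter
equation `q₁₃q₁₂ - q₁₂q₂₃ + q₂₃q₁₃ = -λ q₁₃`, and `R(a) = q¹ ∘ a ∘ q²`. Applying
`x ⊗ y ⊗ z ↦ x ∘ a ∘ y ∘ b ∘ z` to that equation gives the Rota-Baxter identity for `∘`, and it
passes to the twisted product because `R` commutes with `α` and `β`.
-/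

open TensorProduct

section Defs

variable {K A : Type*} [Field K] [NonUnitalNonAssocRing A] [Module K A]
  [SMulCommClass K A A] [IsScalarTower K A A]

/-- `r₁₂s₂₃ = α(r¹) ⊗ r²s¹ ⊗ β(s²)`, as a linear map on `(A⊗A)⊗(A⊗A)`. -/
noncomputable def m1223 (α β : A →ₗ[K] A) :
    (A ⊗[K] A) ⊗[K] (A ⊗[K] A) →ₗ[K] A ⊗[K] (A ⊗[K] A) :=
  TensorProduct.map α (TensorProduct.map (LinearMap.mul' K A) β) ∘ₗ
    TensorProduct.map LinearMap.id (TensorProduct.assoc K A A A).symm.toLinearMap ∘ₗ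
    (TensorProduct.assoc K A A (A ⊗[K] A)).toLinearMap

/-- `r₁₃s₁₂ = ω(r¹)s¹ ⊗ β(s²) ⊗ αψ(r²)`. -/
noncomputable def m1312 (α β ψ ω : A →ₗ[K] A) :
    (A ⊗[K] A) ⊗[K] (A ⊗[K] A) →ₗ[K] A ⊗[K] (A ⊗[K] A) :=
  TensorProduct.map (LinearMap.mul' K A ∘ₗ TensorProduct.map ω LinearMap.id)
      ((TensorProduct.comm K A A).toLinearMap ∘ₗ TensorProduct.map (α ∘ₗ ψ) β) ∘ₗ
    (TensorProduct.tensorTensorTensorComm K A A A A).toLinearMap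

/-- `r₂₃s₁₃ = βω(s¹) ⊗ α(r¹) ⊗ r²ψ(s²)`. -/
noncomputable def m2313 (α β ψ ω : A →ₗ[K] A) :
    (A ⊗[K] A) ⊗[K] (A ⊗[K] A) →ₗ[K] A ⊗[K] (A ⊗[K] A) :=
  (TensorProduct.assoc K A A A).toLinearMap ∘ₗ
    TensorProduct.map ((TensorProduct.comm K A A).toLinearMap ∘ₗ TensorProduct.map α (β ∘ₗ ω))
      (LinearMap.mul' K A ∘ₗ TensorProduct.map LinearMap.id ψ) ∘ₗ
    (TensorProduct.tensorTensorTensorComm K A A A A).toLinearMap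

/-- `r₁₃ = ω(r¹) ⊗ 1 ⊗ ψ(r²)` (unitary case, with unit `e`). -/
noncomputable def t13 (ψ ω : A →ₗ[K] A) (e : A) :
    A ⊗[K] A →ₗ[K] A ⊗[K] (A ⊗[K] A) :=
  TensorProduct.map ω (TensorProduct.mk K A A e ∘ₗ ψ)

/-- The operator `a ↦ β²ψ(r¹)·(α⁻¹β⁻¹(a)·αω(r²))` attached to `r ∈ A⊗A`. -/
noncomputable def rbOp (α β ψ ω : A ≃ₗ[K] A) (r : A ⊗[K] A) (a : A) : A :=
  LinearMap.mul' K A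
    (TensorProduct.map ((β.toLinearMap ∘ₗ β.toLinearMap) ∘ₗ ψ.toLinearMap)
      (LinearMap.mulLeft K (α.symm (β.symm a)) ∘ₗ (α.toLinearMap ∘ₗ ω.toLinearMap)) r)

end Defs

/-- The Rota-Baxter identity of weight `lam` for an operator `R` on a possibly non-associative
algebra. -/
def IsRotaBaxter {K A : Type*} [Mul A] [Add A] [SMul K A] (lam : K) (R : A → A) : Prop :=
  ∀ a b, R a * R b = R (R a * b) + R (a * R b) + lam • R (a * b)

section AssociativeYangBaxter

variable {K B : Type*} [CommRing K] [Ring B] [Algebra K B]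

/-- The embedding `r ↦ r₁₂ = r¹ ⊗ r² ⊗ 1`. -/
noncomputable def leg₁₂ : B ⊗[K] B →ₐ[K] B ⊗[K] (B ⊗[K] B) :=
  Algebra.TensorProduct.map (AlgHom.id K B) Algebra.TensorProduct.includeLeft

/-- The embedding `r ↦ r₁₃ = r¹ ⊗ 1 ⊗ r²`. -/
noncomputable def leg₁₃ : B ⊗[K] B →ₐ[K] B ⊗[K] (B ⊗[K] B) :=
  Algebra.TensorProduct.map (AlgHom.id K B) Algebra.TensorProduct.includeRight

/-- The embedding `r ↦ r₂₃ = 1 ⊗ r¹ ⊗ r²`. -/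
noncomputable def leg₂₃ : B ⊗[K] B →ₐ[K] B ⊗[K] (B ⊗[K] B) :=
  Algebra.TensorProduct.includeRight

@[simp]
lemma leg₁₂_tmul (x y : B) : leg₁₂ (x ⊗ₜ[K] y) = x ⊗ₜ (y ⊗ₜ 1) := rfl

@[simp]
lemma leg₁₃_tmul (x y : B) : leg₁₃ (x ⊗ₜ[K] y) = x ⊗ₜ (1 ⊗ₜ y) := rfl

@[simp]
lemma leg₂₃_tmul (x y : B) : leg₂₃ (x ⊗ₜ[K] y) = 1 ⊗ₜ (x ⊗ₜ y) := rfl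

/-- The associative Yang-Baxter equation of weight `lam` in an ordinary associative algebra. -/
def IsAssocYangBaxter (lam : K) (r : B ⊗[K] B) : Prop :=
  leg₁₃ r * leg₁₂ r - leg₁₂ r * leg₂₃ r + leg₂₃ r * leg₁₃ r = (-lam) • leg₁₃ r

/-- The operator `a ↦ r¹ a r²` attached to a two-tensor `r`. -/
noncomputable def sandwich : B ⊗[K] B →ₗ[K] Module.End K B :=
  (AlgHom.mulLeftRight K B).toLinearMap ∘ₗ
    TensorProduct.map LinearMap.id (MulOpposite.opLinearEquiv K).toLinearMap

@[simp]
lemma sandwich_tmul (x y a : B) : sandwich (x ⊗ₜ[K] y) a = x * a * y := by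
  simp [sandwich]

/-- The evaluation `x ⊗ y ⊗ z ↦ x a y b z` of three-tensors at a pair `(a, b)`. -/
noncomputable def sandwich₃ (a b : B) : B ⊗[K] (B ⊗[K] B) →ₗ[K] B :=
  LinearMap.mul' K B ∘ₗ TensorProduct.map (LinearMap.mulRight K a)
    (LinearMap.mul' K B ∘ₗ TensorProduct.map (LinearMap.mulRight K b) LinearMap.id)

@[simp]
lemma sandwich₃_tmul (a b x y z : B) :
    sandwich₃ a b (x ⊗ₜ[K] (y ⊗ₜ[K] z)) = x * a * (y * b * z) := by
  simp [sandwich₃]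

lemma sandwich₃_leg₁₃ (a b : B) (r : B ⊗[K] B) :
    sandwich₃ a b (leg₁₃ r) = sandwich r (a * b) := by
  induction r with
  | zero => simp
  | add r r' hr hr' => simp [hr, hr']
  | tmul x y => simp [mul_assoc]

lemma sandwich₃_leg₁₃_mul_leg₁₂ (a b : B) (r s : B ⊗[K] B) :
    sandwich₃ a b (leg₁₃ r * leg₁₂ s) = sandwich r (sandwich s a * b) := by
  induction r with
  | zero => simp
  | add r r' hr hr' => simp [add_mul, hr, hr']
  | tmul x y =>
    induction s with
    | zero => simp
    | add s s' hs hs' => simp only [map_add, mul_add, add_mul, LinearMap.add_apply, hs, hs']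
    | tmul z w => simp [mul_assoc]

lemma sandwich₃_leg₁₂_mul_leg₂₃ (a b : B) (r s : B ⊗[K] B) :
    sandwich₃ a b (leg₁₂ r * leg₂₃ s) = sandwich r a * sandwich s b := by
  induction r with
  | zero => simp
  | add r r' hr hr' => simp [add_mul, hr, hr']
  | tmul x y =>
    induction s with
    | zero => simp
    | add s s' hs hs' => simp only [map_add, mul_add, LinearMap.add_apply, hs, hs']
    | tmul z w => simp [mul_assoc]

lemma sandwich₃_leg₂₃_mul_leg₁₃ (a b : B) (r s : B ⊗[K] B) :
    sandwich₃ a b (leg₂₃ r * leg₁₃ s) = sandwich s (a * sandwich r b) := by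
  induction r with
  | zero => simp
  | add r r' hr hr' => simp [add_mul, mul_add, hr, hr']
  | tmul x y =>
    induction s with
    | zero => simp
    | add s s' hs hs' => simp only [map_add, mul_add, LinearMap.add_apply, hs, hs']
    | tmul z w => simp [mul_assoc]

theorem IsAssocYangBaxter.isRotaBaxter_sandwich {lam : K} {r : B ⊗[K] B}
    (hr : IsAssocYangBaxter lam r) : IsRotaBaxter lam (sandwich r) := by
  intro a b
  have h := congrArg (sandwich₃ a b) hr
  rw [map_add, map_sub, map_smul, sandwich₃_leg₁₃_mul_leg₁₂, sandwich₃_leg₁₂_mul_leg₂₃,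
    sandwich₃_leg₂₃_mul_leg₁₃, sandwich₃_leg₁₃, neg_smul] at h
  linear_combination (norm := module) -h

end AssociativeYangBaxter

section Untwist

variable {K A : Type*} [CommRing K] [NonUnitalNonAssocRing A] [Module K A]

/-- The axioms of a unitary BiHom-associative algebra with bijective structure maps `α`, `β` and
unit `e`; the product is the multiplication of `A`. -/
structure IsUnitaryBiHomAssociative (α β : A ≃ₗ[K] A) (e : A) : Prop where
  α_mul (a b : A) : α (a * b) = α a * α b
  β_mul (a b : A) : β (a * b) = β a * β b
  α_β (a : A) : α (β a) = β (α a)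
  assoc (a b c : A) : α a * (b * c) = a * b * β c
  α_unit : α e = e
  β_unit : β e = e
  mul_unit (a : A) : a * e = α a
  unit_mul (a : A) : e * a = β a

/-- The underlying module of a unitary BiHom-associative algebra, to be equipped with the untwisted
product `a ∘ b = α⁻¹(a) β⁻¹(b)`. The axioms are a parameter of this type synonym because the
product depends on `α` and `β`, and its laws on the axioms. -/
def Untwist {α β : A ≃ₗ[K] A} {e : A} (_h : IsUnitaryBiHomAssociative α β e) : Type _ := A

namespace Untwist

variable {α β : A ≃ₗ[K] A} {e : A} (h : IsUnitaryBiHomAssociative α β e)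

instance : AddCommGroup (Untwist h) := inferInstanceAs (AddCommGroup A)

instance : Module K (Untwist h) := inferInstanceAs (Module K A)

/-- The identity map onto the untwisted algebra. -/
def of : A ≃ₗ[K] Untwist h := LinearEquiv.refl K A

instance : Mul (Untwist h) :=
  ⟨fun x y ↦ of h (α.symm ((of h).symm x) * β.symm ((of h).symm y))⟩

instance : One (Untwist h) := ⟨of h e⟩

lemma of_unit : of h e = 1 := rfl

lemma mul_def (x y : Untwist h) :
    x * y = of h (α.symm ((of h).symm x) * β.symm ((of h).symm y)) := rfl

lemma of_mul (a b : A) : of h (a * b) = of h (α a) * of h (β b) := by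
  simp only [mul_def, LinearEquiv.symm_apply_apply]

protected lemma mul_assoc (x y z : Untwist h) : x * y * z = x * (y * z) := by
  obtain ⟨a, rfl⟩ := ((α.trans α).trans (of h)).surjective x
  obtain ⟨b, rfl⟩ := ((β.trans α).trans (of h)).surjective y
  obtain ⟨c, rfl⟩ := ((β.trans β).trans (of h)).surjective z
  simp only [LinearEquiv.trans_apply]
  calc of h (α (α a)) * of h (α (β b)) * of h (β (β c))
      = of h (a * b * β c) := by rw [of_mul, h.α_mul, h.α_β, of_mul]
    _ = of h (α a * (b * c)) := by rw [h.assoc]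
    _ = of h (α (α a)) * (of h (α (β b)) * of h (β (β c))) := by
      rw [of_mul, h.β_mul, of_mul, h.α_β]

protected lemma one_mul (x : Untwist h) : 1 * x = x := by
  obtain ⟨a, rfl⟩ := (β.trans (of h)).surjective x
  calc 1 * of h (β a) = of h (e * a) := by rw [of_mul, h.α_unit, of_unit]
    _ = of h (β a) := by rw [h.unit_mul]

protected lemma mul_one (x : Untwist h) : x * 1 = x := by
  obtain ⟨a, rfl⟩ := (α.trans (of h)).surjective x
  calc of h (α a) * 1 = of h (a * e) := by rw [of_mul, h.β_unit, of_unit]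
    _ = of h (α a) := by rw [h.mul_unit]

instance : Ring (Untwist h) where
  __ := (inferInstance : AddCommGroup (Untwist h))
  mul_assoc := Untwist.mul_assoc h
  one_mul := Untwist.one_mul h
  mul_one := Untwist.mul_one h
  left_distrib x y z := by simp only [mul_def, map_add, mul_add]
  right_distrib x y z := by simp only [mul_def, map_add, add_mul]
  zero_mul x := by simp only [mul_def, map_zero, zero_mul]
  mul_zero x := by simp only [mul_def, map_zero, mul_zero]

variable [SMulCommClass K A A] [IsScalarTower K A A]

instance : Algebra K (Untwist h) :=
  Algebra.ofModule (fun c x y ↦ by simp only [mul_def, map_smul, smul_mul_assoc])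
    (fun c x y ↦ by simp only [mul_def, map_smul, mul_smul_comm])

end Untwist

end Untwist

section Twist

variable {K A B : Type*} [CommRing K] [NonUnitalNonAssocRing A] [Module K A]
  [Ring B] [Algebra K B] {E : A ≃ₗ[K] B} {α β ψ ω : A ≃ₗ[K] A}

lemma IsRotaBaxter.of_twist {lam : K} {R : A → A} {S : B → B}
    (hE : ∀ a b, E (a * b) = E (α a) * E (β b)) (hRS : ∀ a, E (R a) = S (E a))
    (hRα : ∀ a, R (α a) = α (R a)) (hRβ : ∀ a, R (β a) = β (R a)) (hS : IsRotaBaxter lam S) :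
    IsRotaBaxter lam R := by
  intro a b
  apply E.injective
  calc E (R a * R b) = S (E (α a)) * S (E (β b)) := by rw [hE, ← hRα, ← hRβ, hRS, hRS]
    _ = S (S (E (α a)) * E (β b)) + S (E (α a) * S (E (β b))) + lam • S (E (α a) * E (β b)) :=
      hS _ _
    _ = E (R (R a * b) + R (a * R b) + lam • R (a * b)) := by
      simp only [map_add, map_smul, hRS, hE, ← hRα, ← hRβ]

/-- The map `x ⊗ y ↦ ψ(x) ⊗ ω(y)`, read in `B` through `E`; it sends a solution of the associative
BiHom-Yang-Baxter equation to one of the ordinary equation. -/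
noncomputable def untwist₂ (E : A ≃ₗ[K] B) (ψ ω : A ≃ₗ[K] A) : A ⊗[K] A →ₗ[K] B ⊗[K] B :=
  TensorProduct.map (ψ.trans E).toLinearMap (ω.trans E).toLinearMap

/-- The map `x ⊗ y ⊗ z ↦ ψω⁻¹(x) ⊗ y ⊗ ωψ⁻¹(z)`, read in `B` through `E`; it matches the terms of
the associative BiHom-Yang-Baxter equation with those of the ordinary equation. -/
noncomputable def untwist₃ (E : A ≃ₗ[K] B) (ψ ω : A ≃ₗ[K] A) :
    A ⊗[K] (A ⊗[K] A) →ₗ[K] B ⊗[K] (B ⊗[K] B) :=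
  TensorProduct.map ((ω.symm.trans ψ).trans E).toLinearMap
    (TensorProduct.map E.toLinearMap ((ψ.symm.trans ω).trans E).toLinearMap)

@[simp]
lemma untwist₂_tmul (x y : A) : untwist₂ E ψ ω (x ⊗ₜ y) = E (ψ x) ⊗ₜ E (ω y) := rfl

@[simp]
lemma untwist₃_tmul (x y z : A) :
    untwist₃ E ψ ω (x ⊗ₜ (y ⊗ₜ z)) = E (ψ (ω.symm x)) ⊗ₜ (E y ⊗ₜ E (ω (ψ.symm z))) := rfl

end Twist

section BiHomYangBaxter

variable {K A B : Type*} [Field K] [NonUnitalNonAssocRing A] [Module K A]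
  [Ring B] [Algebra K B] {E : A ≃ₗ[K] B} {α β ψ ω : A ≃ₗ[K] A} {e : A}

lemma untwist₃_t13 (hE : E e = 1) (x : A ⊗[K] A) :
    untwist₃ E ψ ω (t13 ψ.toLinearMap ω.toLinearMap e x) = leg₁₃ (untwist₂ E ψ ω x) := by
  induction x with
  | zero => simp
  | add x x' hx hx' => simp only [map_add, hx, hx']
  | tmul x₁ x₂ => simp [t13, hE]

variable [SMulCommClass K A A] [IsScalarTower K A A]

/-- As in the two lemmas that follow, the structure maps applied to `x` and `y` make the identity
hold for arbitrary tensors; they disappear when `x` and `y` are the invariant tensor `r`. -/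
lemma untwist₃_m1312 (hE : ∀ a b, E (a * b) = E (α a) * E (β b))
    (hψmul : ∀ a b, ψ (a * b) = ψ a * ψ b) (hωmul : ∀ a b, ω (a * b) = ω a * ω b)
    (hαψ : ∀ a, α (ψ a) = ψ (α a)) (hβψ : ∀ a, β (ψ a) = ψ (β a))
    (hβω : ∀ a, β (ω a) = ω (β a)) (x y : A ⊗[K] A) :
    untwist₃ E ψ ω (m1312 α.toLinearMap β.toLinearMap ψ.toLinearMap ω.toLinearMap
        (x ⊗ₜ TensorProduct.map ω.toLinearMap ω.toLinearMap y)) =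
      leg₁₃ (untwist₂ E ψ ω (TensorProduct.map α.toLinearMap α.toLinearMap x)) *
        leg₁₂ (untwist₂ E ψ ω (TensorProduct.map β.toLinearMap β.toLinearMap y)) := by
  induction x with
  | zero => simp
  | add x x' hx hx' => simp only [add_tmul, map_add, add_mul, hx, hx']
  | tmul x₁ x₂ =>
    induction y with
    | zero => simp
    | add y y' hy hy' => simp only [tmul_add, map_add, mul_add, hy, hy']
    | tmul y₁ y₂ => simp [m1312, ← hωmul, hψmul, hE, hαψ, hβψ, hβω]

lemma untwist₃_m1223 (hE : ∀ a b, E (a * b) = E (α a) * E (β b))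
    (hαω : ∀ a, α (ω a) = ω (α a)) (hβψ : ∀ a, β (ψ a) = ψ (β a)) (x y : A ⊗[K] A) :
    untwist₃ E ψ ω (m1223 α.toLinearMap β.toLinearMap
        (TensorProduct.map ω.toLinearMap ω.toLinearMap x ⊗ₜ
          TensorProduct.map ψ.toLinearMap ψ.toLinearMap y)) =
      leg₁₂ (untwist₂ E ψ ω (TensorProduct.map α.toLinearMap α.toLinearMap x)) *
        leg₂₃ (untwist₂ E ψ ω (TensorProduct.map β.toLinearMap β.toLinearMap y)) := by
  induction x with
  | zero => simp
  | add x x' hx hx' => simp only [add_tmul, map_add, add_mul, hx, hx']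
  | tmul x₁ x₂ =>
    induction y with
    | zero => simp
    | add y y' hy hy' => simp only [tmul_add, map_add, mul_add, hy, hy']
    | tmul y₁ y₂ => simp [m1223, hE, hαω, hβψ]

lemma untwist₃_m2313 (hE : ∀ a b, E (a * b) = E (α a) * E (β b))
    (hψmul : ∀ a b, ψ (a * b) = ψ a * ψ b) (hωmul : ∀ a b, ω (a * b) = ω a * ω b)
    (hαψ : ∀ a, α (ψ a) = ψ (α a)) (hαω : ∀ a, α (ω a) = ω (α a))
    (hβω : ∀ a, β (ω a) = ω (β a)) (x y : A ⊗[K] A) :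
    untwist₃ E ψ ω (m2313 α.toLinearMap β.toLinearMap ψ.toLinearMap ω.toLinearMap
        (TensorProduct.map ψ.toLinearMap ψ.toLinearMap x ⊗ₜ y)) =
      leg₂₃ (untwist₂ E ψ ω (TensorProduct.map α.toLinearMap α.toLinearMap x)) *
        leg₁₃ (untwist₂ E ψ ω (TensorProduct.map β.toLinearMap β.toLinearMap y)) := by
  induction x with
  | zero => simp
  | add x x' hx hx' => simp only [add_tmul, map_add, add_mul, hx, hx']
  | tmul x₁ x₂ =>
    induction y with
    | zero => simp
    | add y y' hy hy' => simp only [tmul_add, map_add, mul_add, hy, hy']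
    | tmul y₁ y₂ => simp [m2313, ← hψmul, hωmul, hE, hαψ, hαω, hβω]

theorem isAssocYangBaxter_untwist₂ {r : A ⊗[K] A} {lam : K}
    (hE : ∀ a b, E (a * b) = E (α a) * E (β b)) (hEe : E e = 1)
    (hψmul : ∀ a b, ψ (a * b) = ψ a * ψ b) (hωmul : ∀ a b, ω (a * b) = ω a * ω b)
    (hαψ : ∀ a, α (ψ a) = ψ (α a)) (hαω : ∀ a, α (ω a) = ω (α a))
    (hβψ : ∀ a, β (ψ a) = ψ (β a)) (hβω : ∀ a, β (ω a) = ω (β a))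
    (hrα : TensorProduct.map α.toLinearMap α.toLinearMap r = r)
    (hrβ : TensorProduct.map β.toLinearMap β.toLinearMap r = r)
    (hrψ : TensorProduct.map ψ.toLinearMap ψ.toLinearMap r = r)
    (hrω : TensorProduct.map ω.toLinearMap ω.toLinearMap r = r)
    (hYB : m1312 α.toLinearMap β.toLinearMap ψ.toLinearMap ω.toLinearMap (r ⊗ₜ[K] r)
        - m1223 α.toLinearMap β.toLinearMap (r ⊗ₜ[K] r)
        + m2313 α.toLinearMap β.toLinearMap ψ.toLinearMap ω.toLinearMap (r ⊗ₜ[K] r)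
      = (-lam) • t13 ψ.toLinearMap ω.toLinearMap e r) :
    IsAssocYangBaxter lam (untwist₂ E ψ ω r) := by
  have h₁₃₁₂ := untwist₃_m1312 hE hψmul hωmul hαψ hβψ hβω r r
  have h₁₂₂₃ := untwist₃_m1223 hE hαω hβψ r r
  have h₂₃₁₃ := untwist₃_m2313 hE hψmul hωmul hαψ hαω hβω r r
  rw [hrα, hrβ, hrω] at h₁₃₁₂
  rw [hrα, hrβ, hrω, hrψ] at h₁₂₂₃
  rw [hrα, hrβ, hrψ] at h₂₃₁₃
  rw [IsAssocYangBaxter, ← h₁₃₁₂, ← h₁₂₂₃, ← h₂₃₁₃, ← untwist₃_t13 hEe, ← map_sub, ← map_add,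
    hYB, map_smul]

lemma apply_rbOp_eq_sandwich (hE : ∀ a b, E (a * b) = E (α a) * E (β b))
    (hβmul : ∀ a b, β (a * b) = β a * β b) (hαβ : ∀ a, α (β a) = β (α a))
    (hαψ : ∀ a, α (ψ a) = ψ (α a)) (hαω : ∀ a, α (ω a) = ω (α a))
    (hβψ : ∀ a, β (ψ a) = ψ (β a)) (hβω : ∀ a, β (ω a) = ω (β a)) (x : A ⊗[K] A) (a : A) :
    E (rbOp α β ψ ω x a) = sandwich (untwist₂ E ψ ω (TensorProduct.map α.toLinearMap α.toLinearMap
      (TensorProduct.map β.toLinearMap β.toLinearMap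
        (TensorProduct.map β.toLinearMap β.toLinearMap x)))) (E a) := by
  induction x with
  | zero => simp [rbOp]
  | add x x' hx hx' => simp only [rbOp, map_add, LinearMap.add_apply] at hx hx' ⊢; rw [hx, hx']
  | tmul x₁ x₂ => simp [rbOp, hE, hβmul, hαβ, hαψ, hαω, hβψ, hβω, mul_assoc]

lemma map_rbOp {f : A ≃ₗ[K] A} (hfmul : ∀ a b, f (a * b) = f a * f b)
    (hαf : ∀ a, α (f a) = f (α a)) (hβf : ∀ a, β (f a) = f (β a)) (hfψ : ∀ a, f (ψ a) = ψ (f a))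
    (hfω : ∀ a, f (ω a) = ω (f a)) (x : A ⊗[K] A) (a : A) :
    f (rbOp α β ψ ω x a) = rbOp α β ψ ω
      (TensorProduct.map f.toLinearMap f.toLinearMap x) (f a) := by
  have hf_symm : α.symm (β.symm (f a)) = f (α.symm (β.symm a)) := by
    rw [LinearEquiv.symm_apply_eq, LinearEquiv.symm_apply_eq, hαf, hβf, α.apply_symm_apply,
      β.apply_symm_apply]
  induction x with
  | zero => simp [rbOp]
  | add x x' hx hx' => simp only [rbOp, map_add] at hx hx' ⊢; rw [hx, hx']
  | tmul x₁ x₂ => simp [rbOp, hfmul, hf_symm, ← hfψ, ← hfω, hαf, hβf]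

end BiHomYangBaxter

theorem stmt1_general {K A : Type*} [Field K] [NonUnitalNonAssocRing A] [Module K A]
    [SMulCommClass K A A] [IsScalarTower K A A] {α β : A ≃ₗ[K] A} (ψ ω : A ≃ₗ[K] A) {e : A}
    (h : IsUnitaryBiHomAssociative α β e) (r : A ⊗[K] A) (lam : K)
    (hψmul : ∀ a b, ψ (a * b) = ψ a * ψ b) (hωmul : ∀ a b, ω (a * b) = ω a * ω b)
    (hαψ : ∀ a, α (ψ a) = ψ (α a)) (hαω : ∀ a, α (ω a) = ω (α a))
    (hβψ : ∀ a, β (ψ a) = ψ (β a)) (hβω : ∀ a, β (ω a) = ω (β a))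
    (hrα : TensorProduct.map α.toLinearMap α.toLinearMap r = r)
    (hrβ : TensorProduct.map β.toLinearMap β.toLinearMap r = r)
    (hrψ : TensorProduct.map ψ.toLinearMap ψ.toLinearMap r = r)
    (hrω : TensorProduct.map ω.toLinearMap ω.toLinearMap r = r)
    (hYB : m1312 α.toLinearMap β.toLinearMap ψ.toLinearMap ω.toLinearMap (r ⊗ₜ[K] r)
        - m1223 α.toLinearMap β.toLinearMap (r ⊗ₜ[K] r)
        + m2313 α.toLinearMap β.toLinearMap ψ.toLinearMap ω.toLinearMap (r ⊗ₜ[K] r)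
      = (-lam) • t13 ψ.toLinearMap ω.toLinearMap e r) :
    IsLinearMap K (rbOp α β ψ ω r) ∧
    (∀ a, rbOp α β ψ ω r (α a) = α (rbOp α β ψ ω r a)) ∧
    (∀ a, rbOp α β ψ ω r (β a) = β (rbOp α β ψ ω r a)) ∧
    IsRotaBaxter lam (rbOp α β ψ ω r) := by
  have hR (a : A) : Untwist.of h (rbOp α β ψ ω r a) =
      sandwich (untwist₂ (Untwist.of h) ψ ω r) (Untwist.of h a) := by
    simpa only [hrα, hrβ] using
      apply_rbOp_eq_sandwich (Untwist.of_mul h) h.β_mul h.α_β hαψ hαω hβψ hβω r a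
  have hRα (a : A) : rbOp α β ψ ω r (α a) = α (rbOp α β ψ ω r a) := by
    simpa only [hrα] using
      (map_rbOp h.α_mul (fun _ ↦ rfl) (fun b ↦ (h.α_β b).symm) hαψ hαω r a).symm
  have hRβ (a : A) : rbOp α β ψ ω r (β a) = β (rbOp α β ψ ω r a) := by
    simpa only [hrβ] using
      (map_rbOp h.β_mul h.α_β (fun _ ↦ rfl) hβψ hβω r a).symm
  have hYB' : IsAssocYangBaxter lam (untwist₂ (Untwist.of h) ψ ω r) :=
    isAssocYangBaxter_untwist₂ (Untwist.of_mul h) (Untwist.of_unit h) hψmul hωmul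
      hαψ hαω hβψ hβω hrα hrβ hrψ hrω hYB
  refine ⟨⟨fun a b ↦ ?_, fun c a ↦ ?_⟩, hRα, hRβ,
    hYB'.isRotaBaxter_sandwich.of_twist (Untwist.of_mul h) hR hRα hRβ⟩
  · exact (Untwist.of h).injective (by simp only [hR, map_add])
  · exact (Untwist.of h).injective (by simp only [hR, map_smul])

/-- Corollary 2.6: a solution `r` of the associative
BiHom-Yang-Baxter equation of weight `λ` in a unitary BiHom-associative algebra,
invariant under the bijective pairwise-commuting maps `α, β, ψ, ω`, yields a
Rota-Baxter BiHom-associative algebra `(A, μ, R, α, β)` of weight `λ` with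
`R(a) = β²ψ(r¹)(α⁻¹β⁻¹(a)·αω(r²))`. -/
theorem stmt1 {K A : Type*} [Field K] [NonUnitalNonAssocRing A] [Module K A]
    [SMulCommClass K A A] [IsScalarTower K A A]
    (α β ψ ω : A ≃ₗ[K] A) (e : A) (r : A ⊗[K] A) (lam : K)
    -- BiHom-associative algebra axioms for (A, ·, α, β)
    (hαmul : ∀ a b, α (a * b) = α a * α b)
    (hβmul : ∀ a b, β (a * b) = β a * β b)
    (hassoc : ∀ a b c, α a * (b * c) = (a * b) * β c)
    -- ψ, ω multiplicative
    (hψmul : ∀ a b, ψ (a * b) = ψ a * ψ b)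
    (hωmul : ∀ a b, ω (a * b) = ω a * ω b)
    -- α, β, ψ, ω pairwise commute
    (hαβ : ∀ a, α (β a) = β (α a)) (hαψ : ∀ a, α (ψ a) = ψ (α a))
    (hαω : ∀ a, α (ω a) = ω (α a)) (hβψ : ∀ a, β (ψ a) = ψ (β a))
    (hβω : ∀ a, β (ω a) = ω (β a)) (hψω : ∀ a, ψ (ω a) = ω (ψ a))
    -- unit axioms
    (hαe : α e = e) (hβe : β e = e) (hψe : ψ e = e) (hωe : ω e = e)
    (her : ∀ a, a * e = α a) (hel : ∀ a, e * a = β a)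
    -- r is α-, β-, ψ-, ω-invariant
    (hrα : TensorProduct.map α.toLinearMap α.toLinearMap r = r)
    (hrβ : TensorProduct.map β.toLinearMap β.toLinearMap r = r)
    (hrψ : TensorProduct.map ψ.toLinearMap ψ.toLinearMap r = r)
    (hrω : TensorProduct.map ω.toLinearMap ω.toLinearMap r = r)
    -- r is a solution of the abhYBe of weight λ:
    -- r₁₃r₁₂ − r₁₂r₂₃ + r₂₃r₁₃ = −λ·r₁₃
    (hYB : m1312 α.toLinearMap β.toLinearMap ψ.toLinearMap ω.toLinearMap (r ⊗ₜ[K] r)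
        - m1223 α.toLinearMap β.toLinearMap (r ⊗ₜ[K] r)
        + m2313 α.toLinearMap β.toLinearMap ψ.toLinearMap ω.toLinearMap (r ⊗ₜ[K] r)
      = (-lam) • t13 ψ.toLinearMap ω.toLinearMap e r) :
    -- conclusion: (A, μ, R, α, β) is a Rota-Baxter BiHom-associative algebra of weight λ
    IsLinearMap K (rbOp α β ψ ω r) ∧
    (∀ a, rbOp α β ψ ω r (α a) = α (rbOp α β ψ ω r a)) ∧
    (∀ a, rbOp α β ψ ω r (β a) = β (rbOp α β ψ ω r a)) ∧
    (∀ a b, rbOp α β ψ ω r a * rbOp α β ψ ω r b =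
      rbOp α β ψ ω r (rbOp α β ψ ω r a * b) + rbOp α β ψ ω r (a * rbOp α β ψ ω r b)
        + lam • rbOp α β ψ ω r (a * b)) := by
  exact stmt1_general ψ ω ⟨hαmul, hβmul, hαβ, hassoc, hαe, hβe, her, hel⟩ r lam hψmul hωmul
    hαψ hαω hβψ hβω hrα hrβ hrψ hrω hYB
end

section
/- Let (A, R, S, α, β, ξ, ξ) be a curved Rota-Baxter BiHom-system (a double curved Rota-Baxter BiHom-system with ζ = ξ) and define a∗b = R(a)b + aS(b). Then the operation ∗ satisfies the BiHom-associativity law (a∗b)∗β(c) = α(a)∗(b∗c) for all a, b, c ∈ A if and only if α(a)·ξ(b⊗c) = ξ(a⊗b)·β(c) for all a, b, c ∈ A, where · denotes the original multiplication of A. -/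
open TensorProduct

/-- The product `a ∗ b = R(a)·b + a·S(b)` associated to a curved
Rota-Baxter BiHom-system. -/
def bstar {K A : Type*} [Field K] [NonUnitalNonAssocRing A] [Module K A]
    [SMulCommClass K A A] [IsScalarTower K A A]
    (R S : A →ₗ[K] A) (a b : A) : A :=
  R a * b + a * S b

/-!
The Rota-Baxter identities say exactly that `R` and `S` turn `∗` into the original product up to the
curvatures: `R a * R b = R (a ∗ b) + ξ a b` and `S a * S b = S (a ∗ b) + ζ a b`. Consequently
`(a ∗ b) ∗ β c + ξ a b * β c` and `α a ∗ (b ∗ c) + α a * ζ b c` both expand to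
`α (R a) * (R b * c) + α (R a) * (b * S c) + α a * (S b * S c)`, and cancellation compares the two
bracketings of `∗` with the two curvature terms.
-/

/-- BiHom-associativity of a binary operation `op` with structure maps `α` and `β`. The operation is
a variable, so that the notion applies both to the multiplication of an algebra and to the product
deformed by a Rota-Baxter system. -/
def IsBiHomAssoc {A : Type*} (op : A → A → A) (α β : A → A) : Prop :=
  ∀ a b c, op (op a b) (β c) = op (α a) (op b c)

/-- The product `a ∗ b = R a * b + a * S b` of a Rota-Baxter system. It is `bstar` with `R` and `S`
taken as plain functions, so that no ring of scalars is involved. -/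
def rotaBaxterMul {A : Type*} [Mul A] [Add A] (R S : A → A) (a b : A) : A :=
  R a * b + a * S b

section RotaBaxterMul

variable {A : Type*} [NonUnitalNonAssocSemiring A] {R S α β : A → A} {ξ ζ : A → A → A}

local infixl:70 " ∗ " => rotaBaxterMul R S

theorem IsBiHomAssoc.mul_mul (h : IsBiHomAssoc (A := A) (· * ·) α β) (a b c : A) :
    a * b * β c = α a * (b * c) :=
  h a b c

theorem rotaBaxterMul_rotaBaxterMul_left_add (hassoc : IsBiHomAssoc (· * ·) α β)
    (hSβ : Function.Commute S β) (hR : ∀ a b, R a * R b = R (a ∗ b) + ξ a b) (a b c : A) :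
    (a ∗ b) ∗ β c + ξ a b * β c =
      α (R a) * (R b * c) + α (R a) * (b * S c) + α a * (S b * S c) :=
  calc
    (a ∗ b) ∗ β c + ξ a b * β c = (R (a ∗ b) + ξ a b) * β c + (a ∗ b) * β (S c) := by
      rw [rotaBaxterMul, hSβ, add_mul, add_right_comm]
    _ = R a * R b * β c + (R a * b * β (S c) + a * S b * β (S c)) := by
      rw [← hR, ← add_mul, rotaBaxterMul]
    _ = α (R a) * (R b * c) + α (R a) * (b * S c) + α a * (S b * S c) := by
      simp only [hassoc.mul_mul, add_assoc]

theorem rotaBaxterMul_rotaBaxterMul_right_add (hRα : Function.Commute R α)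
    (hS : ∀ a b, S a * S b = S (a ∗ b) + ζ a b) (a b c : A) :
    α a ∗ (b ∗ c) + α a * ζ b c =
      α (R a) * (R b * c) + α (R a) * (b * S c) + α a * (S b * S c) :=
  calc
    α a ∗ (b ∗ c) + α a * ζ b c = α (R a) * (b ∗ c) + α a * (S (b ∗ c) + ζ b c) := by
      rw [rotaBaxterMul, hRα, mul_add, add_assoc]
    _ = α (R a) * (R b * c) + α (R a) * (b * S c) + α a * (S b * S c) := by
      rw [← hS, rotaBaxterMul, mul_add]

theorem stmt5_general [IsCancelAdd A] (hassoc : IsBiHomAssoc (· * ·) α β)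
    (hRα : Function.Commute R α) (hSβ : Function.Commute S β)
    (hR : ∀ a b, R a * R b = R (a ∗ b) + ξ a b) (hS : ∀ a b, S a * S b = S (a ∗ b) + ζ a b) :
    IsBiHomAssoc (rotaBaxterMul R S) α β ↔ ∀ a b c, α a * ζ b c = ξ a b * β c := by
  have expand_eq (a b c : A) :
      (a ∗ b) ∗ β c + ξ a b * β c = α a ∗ (b ∗ c) + α a * ζ b c :=
    (rotaBaxterMul_rotaBaxterMul_left_add hassoc hSβ hR a b c).trans
      (rotaBaxterMul_rotaBaxterMul_right_add hRα hS a b c).symm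
  refine forall₃_congr fun a b c ↦ ⟨fun h ↦ ?_, fun h ↦ ?_⟩
  · exact add_left_cancel (h ▸ (expand_eq a b c).symm)
  · exact add_right_cancel (h ▸ expand_eq a b c)

end RotaBaxterMul

/-- Theorem 3.9(1): for a curved Rota-Baxter BiHom-system
`(A, R, S, α, β, ξ, ξ)` (i.e. a double curved one with `ζ = ξ`), the product
`a∗b = R(a)b + aS(b)` is BiHom-associative iff `α(a)ξ(b⊗c) = ξ(a⊗b)β(c)`. -/
theorem stmt5 {K A : Type*} [Field K] [NonUnitalNonAssocRing A] [Module K A]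
    [SMulCommClass K A A] [IsScalarTower K A A]
    (α β R S : A →ₗ[K] A) (ξ : A ⊗[K] A →ₗ[K] A)
    -- BiHom-associative algebra axioms for (A, ·, α, β)
    (hαβ : ∀ a, α (β a) = β (α a))
    (hαmul : ∀ a b, α (a * b) = α a * α b)
    (hβmul : ∀ a b, β (a * b) = β a * β b)
    (hassoc : ∀ a b c, α a * (b * c) = (a * b) * β c)
    -- R, S commute with α and β
    (hRα : ∀ a, R (α a) = α (R a)) (hRβ : ∀ a, R (β a) = β (R a))
    (hSα : ∀ a, S (α a) = α (S a)) (hSβ : ∀ a, S (β a) = β (S a))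
    -- curved Rota-Baxter BiHom-system identities (ζ = ξ)
    (hR : ∀ a b, R a * R b = R (R a * b) + R (a * S b) + ξ (a ⊗ₜ[K] b))
    (hS : ∀ a b, S a * S b = S (R a * b) + S (a * S b) + ξ (a ⊗ₜ[K] b)) :
    (∀ a b c, bstar R S (bstar R S a b) (β c) = bstar R S (α a) (bstar R S b c)) ↔
      (∀ a b c, α a * ξ (b ⊗ₜ[K] c) = ξ (a ⊗ₜ[K] b) * β c) := by
  simp only [← map_add] at hR hS
  exact stmt5_general (ξ := fun a b ↦ ξ (a ⊗ₜ[K] b)) (ζ := fun a b ↦ ξ (a ⊗ₜ[K] b))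
    (fun a b c ↦ (hassoc a b c).symm) hRα hSβ hR hS
end
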